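/- Let Q ∈ ℝ^{m×r} and ω ≥ 0 satisfy ‖I − QᵀQ‖ ≤ ω, let X, ΔV ∈ ℝ^{m×s}, let S ∈ ℝ^{s×s} be nonsingular, and define U = ((I − QQᵀ)X + ΔV)·S⁻¹ ∈ ℝ^{m×s}. Then σ_min((I − QQᵀ)U) ≥ σ_min(U) − (1+ω)²·(ω‖X‖ + ‖ΔV‖)·‖S⁻¹‖. -/

import Mathlib

open scoped Matrix

/-- The spectral norm (`ℓ²→ℓ²` operator norm) of a real matrix. -/
noncomputable def specNorm {m n : Type*} [Fintype m] [Fintype n] [DecidableEq n]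
    (A : Matrix m n ℝ) : ℝ :=
  ‖LinearMap.toContinuousLinearMap (Matrix.toEuclideanLin A)‖

/-- The smallest singular value of a real matrix: the infimum of `‖A x‖₂` over
unit vectors `x`. -/
noncomputable def sigmaMin {m n : Type*} [Fintype m] [Fintype n] [DecidableEq n]
    (A : Matrix m n ℝ) : ℝ :=
  sInf ((fun x : EuclideanSpace ℝ n => ‖Matrix.toEuclideanLin A x‖) ''
    {x : EuclideanSpace ℝ n | ‖x‖ = 1})

/-- The 2-norm condition number `κ(A) = ‖A‖ / σ_min(A)`. -/
noncomputable def condNum {m n : Type*} [Fintype m] [Fintype n] [DecidableEq n]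
    (A : Matrix m n ℝ) : ℝ :=
  specNorm A / sigmaMin A


section helpers
open scoped Matrix.Norms.L2Operator

theorem specNorm_eq_l2 {m n : ℕ} (A : Matrix (Fin m) (Fin n) ℝ) : specNorm A = ‖A‖ := by
  rw [Matrix.l2_opNorm_def]; rfl

theorem l2_one_le (n : ℕ) : ‖(1 : Matrix (Fin n) (Fin n) ℝ)‖ ≤ 1 := by
  rw [← specNorm_eq_l2, specNorm]
  refine ContinuousLinearMap.opNorm_le_bound _ zero_le_one fun x => ?_
  simp [Matrix.toLpLin_one]

theorem le_specNorm {m n : ℕ} (A : Matrix (Fin m) (Fin n) ℝ) (x : EuclideanSpace ℝ (Fin n)) :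
    ‖Matrix.toEuclideanLin A x‖ ≤ specNorm A * ‖x‖ :=
  ContinuousLinearMap.le_opNorm (LinearMap.toContinuousLinearMap (Matrix.toEuclideanLin A)) x

theorem sigmaMin_sub_le {m n : ℕ} (A B : Matrix (Fin m) (Fin n) ℝ) (c : ℝ)
    (h : specNorm (A - B) ≤ c) : sigmaMin A - c ≤ sigmaMin B := by
  have hc : 0 ≤ c := le_trans (norm_nonneg _) h
  unfold sigmaMin
  rcases Set.eq_empty_or_nonempty {x : EuclideanSpace ℝ (Fin n) | ‖x‖ = 1} with he | hne
  · rw [he]; simpa using hc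
  · refine le_csInf (hne.image _) ?_
    rintro _ ⟨x, hx, rfl⟩
    have hx1 : ‖x‖ = 1 := hx
    have h1 : sInf ((fun x : EuclideanSpace ℝ (Fin n) => ‖Matrix.toEuclideanLin A x‖) ''
        {x : EuclideanSpace ℝ (Fin n) | ‖x‖ = 1}) ≤ ‖Matrix.toEuclideanLin A x‖ := by
      refine csInf_le ⟨0, ?_⟩ ⟨x, hx, rfl⟩
      rintro _ ⟨y, _, rfl⟩
      exact norm_nonneg _
    have h2 := le_specNorm (A - B) x
    rw [hx1, mul_one, map_sub, LinearMap.sub_apply] at h2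
    have h3 := norm_sub_norm_le (Matrix.toEuclideanLin A x) (Matrix.toEuclideanLin B x)
    show _ ≤ ‖Matrix.toEuclideanLin B x‖
    linarith

theorem specNorm_key (m r s : ℕ)
    (Q : Matrix (Fin m) (Fin r) ℝ) (ω : ℝ) (hω : 0 ≤ ω)
    (hQ : ‖1 - Qᵀ * Q‖ ≤ ω)
    (X D : Matrix (Fin m) (Fin s) ℝ) (T : Matrix (Fin s) (Fin s) ℝ) :
    ‖((1 - Q * Qᵀ) * X + D) * T - (1 - Q * Qᵀ) * (((1 - Q * Qᵀ) * X + D) * T)‖ ≤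
      (1 + ω) ^ 2 * (ω * ‖X‖ + ‖D‖) * ‖T‖ := by
  have e : ((1 - Q * Qᵀ) * X + D) * T - (1 - Q * Qᵀ) * (((1 - Q * Qᵀ) * X + D) * T)
      = Q * (((1 - Qᵀ * Q) * (Qᵀ * X) + Qᵀ * D) * T) := by
    simp only [Matrix.sub_mul, Matrix.mul_sub, Matrix.add_mul, Matrix.mul_add, Matrix.one_mul,
      Matrix.mul_assoc]
    abel
  have hT : ‖Qᵀ‖ = ‖Q‖ := by
    rw [← Matrix.conjTranspose_eq_transpose_of_trivial, Matrix.l2_opNorm_conjTranspose]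
  have hQ2 : ‖Q‖ * ‖Q‖ ≤ 1 + ω := by
    rw [← Matrix.l2_opNorm_conjTranspose_mul_self, Matrix.conjTranspose_eq_transpose_of_trivial]
    have h1 := norm_sub_le (1 : Matrix (Fin r) (Fin r) ℝ) (1 - Qᵀ * Q)
    rw [sub_sub_cancel] at h1
    linarith [l2_one_le r]
  rw [e]
  have a1 : ‖(1 - Qᵀ * Q) * (Qᵀ * X)‖ ≤ ω * (‖Q‖ * ‖X‖) := by
    refine (Matrix.l2_opNorm_mul _ _).trans (mul_le_mul hQ ?_ (norm_nonneg _) hω)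
    rw [← hT]; exact Matrix.l2_opNorm_mul _ _
  have a2 : ‖Qᵀ * D‖ ≤ ‖Q‖ * ‖D‖ := by
    rw [← hT]; exact Matrix.l2_opNorm_mul _ _
  have a3 := norm_add_le ((1 - Qᵀ * Q) * (Qᵀ * X)) (Qᵀ * D)
  calc _ ≤ ‖Q‖ * ‖((1 - Qᵀ * Q) * (Qᵀ * X) + Qᵀ * D) * T‖ := Matrix.l2_opNorm_mul _ _
    _ ≤ ‖Q‖ * (‖(1 - Qᵀ * Q) * (Qᵀ * X) + Qᵀ * D‖ * ‖T‖) := by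
      gcongr; exact Matrix.l2_opNorm_mul _ _
    _ ≤ ‖Q‖ * ((ω * (‖Q‖ * ‖X‖) + ‖Q‖ * ‖D‖) * ‖T‖) := by
      gcongr; linarith
    _ = (‖Q‖ * ‖Q‖) * (ω * ‖X‖ + ‖D‖) * ‖T‖ := by ring
    _ ≤ (1 + ω) ^ 2 * (ω * ‖X‖ + ‖D‖) * ‖T‖ := by
      gcongr; nlinarith

end helpers

theorem stmt_13 (m r s : ℕ)
    (Q : Matrix (Fin m) (Fin r) ℝ) (ω : ℝ) (hω : 0 ≤ ω)
    (hQ : specNorm (1 - Qᵀ * Q) ≤ ω)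
    (X ΔV : Matrix (Fin m) (Fin s) ℝ)
    (S : Matrix (Fin s) (Fin s) ℝ) (hS : IsUnit S.det) :
    sigmaMin ((1 - Q * Qᵀ) * (((1 - Q * Qᵀ) * X + ΔV) * S⁻¹)) ≥
      sigmaMin (((1 - Q * Qᵀ) * X + ΔV) * S⁻¹) -
        (1 + ω) ^ 2 * (ω * specNorm X + specNorm ΔV) * specNorm S⁻¹ := by
  apply sigmaMin_sub_le
  rw [specNorm_eq_l2] at hQ
  simp only [specNorm_eq_l2]
  exact specNorm_key m r s Q ω hω hQ X ΔV S⁻¹
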